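/- Let m, n, k be such that n = m + k, let Y have density proportional to (1 + ‖y‖²)^(−(m+k)/2) on ℝ^k, and let a_n be an independent chi random variable with n degrees of freedom. Then Z = (a_n / √(1 + ‖Y‖²)) · Y is distributed as a standard Gaussian vector in ℝ^k. -/

import Mathlib

/-! For a measurable test function `f ≥ 0`, the expectation of `f(Z)` is a double integral in
`(t, y)`. Substituting `t = √(1 + ‖y‖²) s` for fixed `y` absorbs the Student density exactly, since
`n = m + k`, and turns the integrand into `f(s y) s^(n-1) exp(-s²(1 + ‖y‖²)/2)`. After exchanging the
integrals, substituting `z = s y` for fixed `s > 0` separates the variables and leaves the integral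
of `f` against `exp(-‖z‖²/2)` times a constant that does not depend on `f`. So the law of `Z` is a
multiple of the standard Gaussian, and the multiple is `1` because both have total mass one.
The normalizing constants of the chi and Student densities never need to be computed. -/

open MeasureTheory Real

/-- The standard Gaussian measure on `ℝ^k` (identity covariance), given by its density. -/
noncomputable def stdGaussian (k : ℕ) : Measure (EuclideanSpace ℝ (Fin k)) :=
  volume.withDensity fun z =>
    ENNReal.ofReal ((2 * Real.pi) ^ (-(k : ℝ) / 2) * Real.exp (-‖z‖ ^ 2 / 2))

/-- Measure on `ℝ` with density proportional to the chi density with `n` degrees of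
freedom, `t^(n-1) exp(-t²/2)` on `(0,∞)`. -/
noncomputable def chiMeasure (n : ℕ) (c : ℝ) : Measure ℝ :=
  volume.withDensity fun t =>
    ENNReal.ofReal (c * if 0 < t then t ^ ((n : ℝ) - 1) * Real.exp (-t ^ 2 / 2) else 0)

/-- Measure on `ℝ^k` with the multivariate Student-t density `∝ (1+‖y‖²)^(-(m+k)/2)`. -/
noncomputable def studentMeasure (m k : ℕ) (c : ℝ) : Measure (EuclideanSpace ℝ (Fin k)) :=
  volume.withDensity fun y =>
    ENNReal.ofReal (c * (1 + ‖y‖ ^ 2) ^ (-((m : ℝ) + k) / 2))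

lemma lintegral_eq_smul {E : Type*} [NormedAddCommGroup E] [NormedSpace ℝ E]
    [FiniteDimensional ℝ E] [MeasurableSpace E] [BorelSpace E] (μ : Measure E) [μ.IsAddHaarMeasure]
    {r : ℝ} (hr : 0 < r) (g : E → ENNReal) :
    ∫⁻ x, g x ∂μ = ENNReal.ofReal (r ^ Module.finrank ℝ E) * ∫⁻ x, g (r • x) ∂μ := by
  have h := lintegral_map_equiv (μ := μ) g (MeasurableEquiv.smul (Units.mk0 r hr.ne'))
  have h2 : ∫⁻ x, g (r • x) ∂μ = ∫⁻ x, g x ∂(Measure.map (fun x => r • x) μ) := h.symm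
  have hp : 0 < r ^ Module.finrank ℝ E := by positivity
  rw [h2, Measure.map_addHaar_smul μ hr.ne', lintegral_smul_measure, smul_eq_mul, ← mul_assoc,
    ← ENNReal.ofReal_mul hp.le, abs_of_pos (by positivity), mul_inv_cancel₀ hp.ne',
    ENNReal.ofReal_one, one_mul]

lemma isProbabilityMeasure_stdGaussian (k : ℕ) : IsProbabilityMeasure (stdGaussian k) := by
  constructor
  have hI : ∫ z : EuclideanSpace ℝ (Fin k), Real.exp (-‖z‖ ^ 2 / 2) = (2 * π) ^ ((k : ℝ) / 2) := by
    have h := GaussianFourier.integral_rexp_neg_mul_sq_norm (V := EuclideanSpace ℝ (Fin k))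
      (b := 1 / 2) (by norm_num)
    rw [finrank_euclideanSpace_fin] at h
    convert h using 3
    · congr 1; ring
    · ring
  have hpos : 0 < (2 * π) ^ ((k : ℝ) / 2) := by positivity
  have hinteg : Integrable fun z : EuclideanSpace ℝ (Fin k) => Real.exp (-‖z‖ ^ 2 / 2) := by
    by_contra hc
    rw [integral_undef hc] at hI
    exact hpos.ne hI
  rw [stdGaussian, withDensity_apply _ MeasurableSet.univ, Measure.restrict_univ,
    ← ofReal_integral_eq_lintegral_ofReal (hinteg.const_mul _)
      (Filter.Eventually.of_forall fun z => by positivity),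
    integral_const_mul, hI, neg_div, Real.rpow_neg (by positivity), inv_mul_cancel₀ hpos.ne',
    ENNReal.ofReal_one]

/-- Pointwise form of the substitution `t = √(1 + ‖y‖²) s`, with `u = ‖y‖`: the Student density
cancels against the Jacobian and the power of `t`. -/
lemma density_radial (n : ℝ) (ca cY u s : ℝ) :
    cY * (1 + u ^ 2) ^ (-n / 2) * (√(1 + u ^ 2) *
      (ca * if 0 < √(1 + u ^ 2) * s then
        (√(1 + u ^ 2) * s) ^ (n - 1) * exp (-(√(1 + u ^ 2) * s) ^ 2 / 2) else 0)) =
    cY * ca * if 0 < s then s ^ (n - 1) * exp (-s ^ 2 / 2) * exp (-(s * u) ^ 2 / 2) else 0 := by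
  have hw : 0 < 1 + u ^ 2 := by positivity
  have hr : 0 < √(1 + u ^ 2) := Real.sqrt_pos.2 hw
  by_cases hs : 0 < s
  · have hrs : 0 < √(1 + u ^ 2) * s := by positivity
    have h1 : (1 + u ^ 2) ^ (-n / 2) * (√(1 + u ^ 2) * √(1 + u ^ 2) ^ (n - 1)) = 1 := by
      have h0 : √(1 + u ^ 2) * √(1 + u ^ 2) ^ (n - 1) = √(1 + u ^ 2) ^ n := by
        rw [Real.rpow_sub_one hr.ne', mul_div_cancel₀ _ hr.ne']
      rw [h0, Real.sqrt_eq_rpow, ← Real.rpow_mul hw.le,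
        ← Real.rpow_add hw]
      ring_nf
      simp
    have h2 : exp (-(√(1 + u ^ 2) * s) ^ 2 / 2) = exp (-s ^ 2 / 2) * exp (-(s * u) ^ 2 / 2) := by
      rw [← Real.exp_add, mul_pow, Real.sq_sqrt hw.le]
      congr 1; ring
    rw [if_pos hrs, if_pos hs, Real.mul_rpow hr.le hs.le, h2]
    linear_combination (cY * ca * s ^ (n - 1) * exp (-s ^ 2 / 2) * exp (-(s * u) ^ 2 / 2)) * h1
  · have hrs : ¬ 0 < √(1 + u ^ 2) * s := fun h => hs (pos_of_mul_pos_right h hr.le)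
    simp [hs, hrs]

/-- Theorem 2 of the paper: `Z = (aₙ/√(1+‖Y‖²)) • Y` is standard Gaussian, where `Y` is
Student-t and `aₙ` is an independent chi variable with `n = m + k` degrees of freedom. -/
theorem student_to_gaussian (m n k : ℕ) (hn : n = m + k) (ca cY : ℝ)
    (hca : 0 < ca) (hcY : 0 < cY)
    (ha : IsProbabilityMeasure (chiMeasure n ca))
    (hY : IsProbabilityMeasure (studentMeasure m k cY)) :
    ((chiMeasure n ca).prod (studentMeasure m k cY)).map
        (fun p : ℝ × EuclideanSpace ℝ (Fin k) =>
          (p.1 / Real.sqrt (1 + ‖p.2‖ ^ 2)) • p.2) =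
      stdGaussian k := by
  subst hn
  have hmap : Measurable fun p : ℝ × EuclideanSpace ℝ (Fin k) =>
      (p.1 / Real.sqrt (1 + ‖p.2‖ ^ 2)) • p.2 := by fun_prop
  -- `D` is the part of the joint density after `t = √(1 + ‖y‖²) s` that depends on `s` alone.
  set D : ℝ → ℝ := fun s =>
    cY * ca * if 0 < s then s ^ ((m : ℝ) + k - 1) * exp (-s ^ 2 / 2) else 0 with hD
  have hD0 : ∀ s, 0 ≤ D s := by
    intro s
    simp only [hD]
    split_ifs <;> positivity
  have hDm : Measurable D := by
    refine Measurable.const_mul (Measurable.ite measurableSet_Ioi ?_ measurable_const) _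
    fun_prop
  set q : ℝ := (2 * π) ^ (-(k : ℝ) / 2) with hq
  have hqpos : 0 < q := by positivity
  -- The ratio of the law of `Z` to the Gaussian; `(s ^ k)⁻¹` is the Jacobian of `z = s y`.
  set C : ENNReal := ∫⁻ s : ℝ, ENNReal.ofReal (D s * (s ^ k)⁻¹ * q⁻¹) with hC
  have key : ((chiMeasure (m + k) ca).prod (studentMeasure m k cY)).map
        (fun p : ℝ × EuclideanSpace ℝ (Fin k) =>
          (p.1 / Real.sqrt (1 + ‖p.2‖ ^ 2)) • p.2) = C • stdGaussian k := by
    refine Measure.ext_of_lintegral _ fun f hf => ?_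
    have hfm : Measurable fun p : ℝ × EuclideanSpace ℝ (Fin k) =>
      f ((p.1 / Real.sqrt (1 + ‖p.2‖ ^ 2)) • p.2) := hf.comp hmap
    have hchi : Measurable fun t : ℝ => ENNReal.ofReal (ca * if 0 < t then
        t ^ (((m + k : ℕ) : ℝ) - 1) * Real.exp (-t ^ 2 / 2) else 0) := by
      refine (Measurable.const_mul (Measurable.ite measurableSet_Ioi ?_ measurable_const)
        _).ennreal_ofReal
      fun_prop
    have hst : Measurable fun y : EuclideanSpace ℝ (Fin k) =>
        ENNReal.ofReal (cY * (1 + ‖y‖ ^ 2) ^ (-((m : ℝ) + k) / 2)) := by fun_prop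
    have hga : Measurable fun z : EuclideanSpace ℝ (Fin k) =>
        ENNReal.ofReal (q * Real.exp (-‖z‖ ^ 2 / 2)) := by fun_prop
    have hin : Measurable fun y : EuclideanSpace ℝ (Fin k) =>
        ∫⁻ t, f ((t / Real.sqrt (1 + ‖y‖ ^ 2)) • y) ∂(chiMeasure (m + k) ca) :=
      hfm.lintegral_prod_left'
    rw [lintegral_map hf hmap, lintegral_prod_symm _ hfm.aemeasurable, lintegral_smul_measure,
      smul_eq_mul]
    conv_lhs => rw [studentMeasure]
    rw [lintegral_withDensity_eq_lintegral_mul _ hst hin]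
    have step1 : ∀ y : EuclideanSpace ℝ (Fin k),
        ENNReal.ofReal (cY * (1 + ‖y‖ ^ 2) ^ (-((m : ℝ) + k) / 2)) *
          ∫⁻ t, f ((t / Real.sqrt (1 + ‖y‖ ^ 2)) • y) ∂(chiMeasure (m + k) ca) =
        ∫⁻ s : ℝ, ENNReal.ofReal (D s * exp (-(s * ‖y‖) ^ 2 / 2)) * f (s • y) := by
      intro y
      have hr : 0 < √(1 + ‖y‖ ^ 2) := Real.sqrt_pos.2 (by positivity)
      have hy : Measurable fun t : ℝ => f ((t / Real.sqrt (1 + ‖y‖ ^ 2)) • y) :=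
        hf.comp (by fun_prop)
      rw [chiMeasure, lintegral_withDensity_eq_lintegral_mul _ hchi hy, lintegral_eq_smul volume hr,
        ← mul_assoc, ← ENNReal.ofReal_mul (by positivity), ← lintegral_const_mul' _ _
        ENNReal.ofReal_ne_top]
      refine lintegral_congr fun s => ?_
      simp only [Pi.mul_apply, smul_eq_mul, Module.finrank_self, pow_one]
      rw [← mul_assoc, ← ENNReal.ofReal_mul (by positivity), mul_div_cancel_left₀ _ hr.ne']
      congr 2
      have h := density_radial ((m : ℝ) + k) ca cY ‖y‖ s
      simp only [hD]
      push_cast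
      rw [mul_assoc (cY * _), h]
      split_ifs <;> ring
    have step2 : ∀ s : ℝ,
        ∫⁻ y : EuclideanSpace ℝ (Fin k),
          ENNReal.ofReal (D s * exp (-(s * ‖y‖) ^ 2 / 2)) * f (s • y) =
        ENNReal.ofReal (D s * (s ^ k)⁻¹ * q⁻¹) * ∫⁻ z, f z ∂(stdGaussian k) := by
      intro s
      by_cases hs : 0 < s
      · rw [stdGaussian, lintegral_withDensity_eq_lintegral_mul _ hga hf,
          lintegral_eq_smul volume hs (_ * f), ← mul_assoc, finrank_euclideanSpace_fin,
          ← ENNReal.ofReal_mul (mul_nonneg (mul_nonneg (hD0 s) (by positivity)) (by positivity)),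
          ← lintegral_const_mul' _ _ ENNReal.ofReal_ne_top]
        refine lintegral_congr fun y => ?_
        simp only [Pi.mul_apply]
        rw [← mul_assoc, ← ENNReal.ofReal_mul (mul_nonneg (mul_nonneg (mul_nonneg (hD0 s)
          (by positivity)) (by positivity)) (by positivity)), norm_smul, Real.norm_of_nonneg hs.le]
        congr 2
        field_simp
      · have : D s = 0 := by simp [hD, hs]
        simp [this]
    simp only [Pi.mul_apply, step1]
    rw [lintegral_lintegral_swap]
    · simp only [step2]
      rw [lintegral_mul_const, hC]
      fun_prop
    · refine Measurable.aemeasurable (Measurable.mul ?_ (hf.comp (by fun_prop)))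
      fun_prop
  have hG := isProbabilityMeasure_stdGaussian k
  have hP : IsProbabilityMeasure (((chiMeasure (m + k) ca).prod (studentMeasure m k cY)).map
        (fun p : ℝ × EuclideanSpace ℝ (Fin k) =>
          (p.1 / Real.sqrt (1 + ‖p.2‖ ^ 2)) • p.2)) :=
    Measure.isProbabilityMeasure_map hmap.aemeasurable
  have hC1 : C = 1 := by
    have h := hP.measure_univ
    rwa [key, Measure.smul_apply, measure_univ, smul_eq_mul, mul_one] at h
  rw [key, hC1, one_smul]
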